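/- Let Λ ⊂ ℝ^n be a full-rank lattice with n ≥ 16, let σ_s, σ_w > 0 and ε ∈ (0,1). Set α = σ_s²/(σ_s²+σ_w²), σ_eff² = σ_s²σ_w²/(σ_s²+σ_w²), s_ε = err⁻¹_ε(Λ)·σ_eff, and γ(Λ,ε) = err⁻¹_ε(Λ)²·V(Λ)^{2/n}/(2πe). Then the set of shifts t ∈ ℝ^n with the following three properties has measure at least 1/2 under the Gaussian measure N(0, σ_s² I_n): letting X ~ D_{s_ε Λ + t, σ_s} and W ~ N(0, σ_w² I_n) be independent, (1) Pr[(1−α)X + αW ∉ s_ε·V(Λ)] ≤ 6ε; (2) E[‖X‖²] ≤ (1 + 4/√n)·n·σ_s²; (3) (1/n)·H(X) ≥ (1/2)·log(1 + σ_s²/σ_w²) − ((1/2)·log γ(Λ,ε) + 2/√n + 4/n). -/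

import Mathlib

open MeasureTheory Real Filter Pointwise
open scoped ENNReal RealInnerProductSpace

noncomputable section

/-- The (continuous) Gaussian density with parameter `σ` on `ℝⁿ`:
`f_σ(x) = (2πσ²)^{-n/2} exp(-‖x‖²/(2σ²))`. -/
def gaussF (n : ℕ) (σ : ℝ) (x : EuclideanSpace ℝ (Fin n)) : ℝ :=
  (2 * π * σ ^ 2) ^ (-(n : ℝ) / 2) * Real.exp (-‖x‖ ^ 2 / (2 * σ ^ 2))

/-- The Gaussian mass `f_σ(S) = Σ_{y ∈ S} f_σ(y)` of a (countable) set `S ⊆ ℝⁿ`. -/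
def gaussMass (n : ℕ) (σ : ℝ) (S : Set (EuclideanSpace ℝ (Fin n))) : ℝ :=
  ∑' y : S, gaussF n σ y

/-- The Gaussian measure `N(0, σ² Iₙ)` on `ℝⁿ`, given by its density w.r.t. Lebesgue measure. -/
def gaussMeasure (n : ℕ) (σ : ℝ) : Measure (EuclideanSpace ℝ (Fin n)) :=
  volume.withDensity fun x => ENNReal.ofReal (gaussF n σ x)

/-- The coset `S + t` of a set `S ⊆ ℝⁿ`, i.e. `{x | x - t ∈ S}`. -/
def coset (n : ℕ) (S : Set (EuclideanSpace ℝ (Fin n))) (t : EuclideanSpace ℝ (Fin n)) :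
    Set (EuclideanSpace ℝ (Fin n)) := {x | x - t ∈ S}

/-- The Voronoi cell of `S`: `{x | ⟪x,y⟫ ≤ ‖y‖²/2 for all y ∈ S}`. -/
def voronoi (n : ℕ) (S : Set (EuclideanSpace ℝ (Fin n))) : Set (EuclideanSpace ℝ (Fin n)) :=
  {x | ∀ y ∈ S, ⟪x, y⟫ ≤ ‖y‖ ^ 2 / 2}

/-- The inverse error function `err⁻¹_ε(Λ)`: the least `s > 0` such that a standard Gaussian
leaves `s · V(Λ)` with probability at most `ε`. -/
def errInv (n : ℕ) (ε : ℝ) (S : Set (EuclideanSpace ℝ (Fin n))) : ℝ :=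
  sInf {s : ℝ | 0 < s ∧ gaussMeasure n 1 ((s • voronoi n S)ᶜ) ≤ ENNReal.ofReal ε}

/-- The Shannon entropy (in nats) of the discrete Gaussian `D_{S,σ}` supported on `S`,
which assigns mass `f_σ(y)/f_σ(S)` to each `y ∈ S`. -/
def dgEntropy (n : ℕ) (σ : ℝ) (S : Set (EuclideanSpace ℝ (Fin n))) : ℝ :=
  -∑' y : S, (gaussF n σ y / gaussMass n σ S) * Real.log (gaussF n σ y / gaussMass n σ S)

/-- The flatness factor `ε_Λ(σ) = sup_{x ∈ V(Λ)} |V(Λ)·f_σ(Λ+x) − 1|`. -/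
def flatness (n : ℕ) (L : Submodule ℤ (EuclideanSpace ℝ (Fin n))) (σ : ℝ) : ℝ :=
  ⨆ x : voronoi n (L : Set (EuclideanSpace ℝ (Fin n))),
    |ZLattice.covolume L volume *
        gaussMass n σ (coset n (L : Set (EuclideanSpace ℝ (Fin n))) x) - 1|

/-! Averaged over the Gaussian dither `t`, a sample of `D_{M+t,σ}` is exactly Gaussian, for any
lattice `M`. Hence Markov's inequality, applied over `t`, transfers to the typical coset any bound
on the Gaussian mean of a nonnegative function. It is used twice: for the decoding error, whose
Gaussian mean is the probability that the effective noise leaves the Voronoi cell, because `(1 - α)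
X + α W` is Gaussian of variance `σ_eff²`; and for `(‖X‖² - n σ²)²`, of Gaussian mean `2 n σ⁴`,
which controls the power from both sides. Unfolding over a fundamental domain shows that the mass of
the coset is below `c / V(M)` with probability at most `c`, so it is typically not small, and the
entropy of `D_{M+t,σ}` is an explicit function of the power and of the mass. -/

section OrbitSum

variable (G : Type*) {X : Type*} [AddGroup G] [AddAction G X]

/-- The sum of `f` over the orbit of `x`, counted with multiplicity. For a lattice acting by
translation this is the periodization of `f`, i.e. the mass `f` gives to a coset. -/
def orbitSum (f : X → ℝ≥0∞) (x : X) : ℝ≥0∞ := ∑' g : G, f (g +ᵥ x)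

variable {G}

lemma orbitSum_vadd (f : X → ℝ≥0∞) (g : G) (x : X) : orbitSum G f (g +ᵥ x) = orbitSum G f x := by
  unfold orbitSum
  simp_rw [vadd_vadd]
  exact (Equiv.addRight g).tsum_eq fun h => f (h +ᵥ x)

lemma orbitSum_mul_of_invariant {q : X → ℝ≥0∞} (hq : ∀ (g : G) x, q (g +ᵥ x) = q x)
    (f : X → ℝ≥0∞) (x : X) : orbitSum G (fun y => f y * q y) x = orbitSum G f x * q x := by
  simp only [orbitSum, hq, ENNReal.tsum_mul_right]

variable [MeasurableSpace X] [MeasurableConstVAdd G X] [Countable G]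

lemma measurable_orbitSum {f : X → ℝ≥0∞} (hf : Measurable f) : Measurable (orbitSum G f) :=
  Measurable.tsum fun g => hf.comp (measurable_const_vadd g)

variable {μ : Measure X} [VAddInvariantMeasure G X μ] {D : Set X}

lemma lintegral_eq_setLIntegral_orbitSum (hD : IsAddFundamentalDomain G D μ) {f : X → ℝ≥0∞}
    (hf : Measurable f) : ∫⁻ x, f x ∂μ = ∫⁻ x in D, orbitSum G f x ∂μ := by
  rw [hD.lintegral_eq_tsum'']
  exact (lintegral_tsum fun g => (hf.comp (measurable_const_vadd g)).aemeasurable).symm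

lemma lintegral_withDensity_of_invariant (hD : IsAddFundamentalDomain G D μ) {F q : X → ℝ≥0∞}
    (hF : Measurable F) (hq : Measurable q) (hinv : ∀ (g : G) x, q (g +ᵥ x) = q x) :
    ∫⁻ x, q x ∂(μ.withDensity F) = ∫⁻ x in D, orbitSum G F x * q x ∂μ := by
  rw [lintegral_withDensity_eq_lintegral_mul _ hF hq]
  refine (lintegral_eq_setLIntegral_orbitSum hD (hF.mul hq)).trans (lintegral_congr fun x => ?_)
  exact orbitSum_mul_of_invariant hinv F x

/-- Averaging over the orbit of an `F`-distributed point does not change the expectation of `g`.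
Only `≤` survives in general, because the ratio is junk on orbits of `F`-mass `0` or `∞`. -/
lemma lintegral_orbitSum_div_orbitSum_le (hD : IsAddFundamentalDomain G D μ) {F g : X → ℝ≥0∞}
    (hF : Measurable F) (hg : Measurable g) :
    ∫⁻ x, orbitSum G (fun y => F y * g y) x / orbitSum G F x ∂(μ.withDensity F) ≤
      ∫⁻ x, g x ∂(μ.withDensity F) := by
  have hFg : Measurable fun y => F y * g y := hF.mul hg
  calc ∫⁻ x, orbitSum G (fun y => F y * g y) x / orbitSum G F x ∂(μ.withDensity F)
      = ∫⁻ x in D, orbitSum G F x *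
          (orbitSum G (fun y => F y * g y) x / orbitSum G F x) ∂μ :=
        lintegral_withDensity_of_invariant hD hF
          ((measurable_orbitSum hFg).div (measurable_orbitSum hF))
          fun g x => by simp only [orbitSum_vadd]
    _ ≤ ∫⁻ x in D, orbitSum G (fun y => F y * g y) x ∂μ :=
        lintegral_mono fun x => ENNReal.mul_div_le
    _ = ∫⁻ x, F x * g x ∂μ := (lintegral_eq_setLIntegral_orbitSum hD hFg).symm
    _ = ∫⁻ x, g x ∂(μ.withDensity F) := (lintegral_withDensity_eq_lintegral_mul _ hF hg).symm

lemma ae_orbitSum_ne_top (hD : IsAddFundamentalDomain G D μ) {F : X → ℝ≥0∞} (hF : Measurable F)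
    (hfin : ∫⁻ x, F x ∂μ ≠ ∞) : ∀ᵐ x ∂μ, orbitSum G F x ≠ ∞ := by
  have hm := measurable_orbitSum (G := G) hF
  have hnull : μ (orbitSum G F ⁻¹' {∞}) = 0 := by
    refine hD.measure_zero_of_invariant _ (fun g => ?_) ?_
    · ext x
      rw [← neg_neg g, Set.mem_neg_vadd_set_iff, Set.mem_preimage, orbitSum_vadd, Set.mem_preimage]
    · rw [lintegral_eq_setLIntegral_orbitSum hD hF] at hfin
      rw [← Measure.restrict_apply (hm (measurableSet_singleton ∞))]
      exact measure_mono_null (fun x hx => not_not.2 hx)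
        (ae_iff.1 ((ae_lt_top hm hfin).mono fun x hx => hx.ne))
  exact measure_mono_null (fun x hx => not_not.1 hx) hnull

lemma withDensity_orbitSum_lt_le (hD : IsAddFundamentalDomain G D μ) {F : X → ℝ≥0∞}
    (hF : Measurable F) (c : ℝ≥0∞) :
    μ.withDensity F {x | orbitSum G F x < c} ≤ c * μ D := by
  have hA : MeasurableSet {x | orbitSum G F x < c} := measurable_orbitSum hF measurableSet_Iio
  rw [← lintegral_indicator_one hA, lintegral_withDensity_of_invariant hD hF
    (measurable_one.indicator hA) fun g x => by
      simp only [Set.indicator, Set.mem_ofPred_eq, orbitSum_vadd, Pi.one_apply],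
    ← setLIntegral_const]
  refine lintegral_mono fun x => ?_
  by_cases hx : orbitSum G F x < c
  · simpa [hx] using hx.le
  · simp [hx]

end OrbitSum

section Scaling

variable {E : Type*} [NormedAddCommGroup E] [NormedSpace ℝ E] (L : Submodule ℤ E) {s : ℝ}

lemma smul_eq_zlatticeComap (hs : s ≠ 0) : s • L = ZLattice.comap ℝ L
    (ContinuousLinearEquiv.smulLeft (Units.mk0 s hs)⁻¹ : E ≃L[ℝ] E).toLinearMap := by
  ext x
  rw [← SetLike.mem_coe, Submodule.coe_pointwise_smul, Set.mem_smul_set_iff_inv_smul_mem₀ hs]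
  rfl

lemma discreteTopology_smul [DiscreteTopology L] (hs : s ≠ 0) :
    DiscreteTopology (s • L : Submodule ℤ E) := by
  rw [smul_eq_zlatticeComap L hs]
  infer_instance

lemma isZLattice_smul [DiscreteTopology L] [IsZLattice ℝ L] (hs : s ≠ 0)
    [DiscreteTopology (s • L : Submodule ℤ E)] : IsZLattice ℝ (s • L : Submodule ℤ E) := by
  simp only [smul_eq_zlatticeComap L hs]
  infer_instance

variable [FiniteDimensional ℝ E] [MeasurableSpace E] [BorelSpace E]

lemma covolume_zlatticeComap [DiscreteTopology L] [IsZLattice ℝ L] (μ : Measure E)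
    [μ.IsAddHaarMeasure] (e : E ≃L[ℝ] E) :
    ZLattice.covolume (ZLattice.comap ℝ L e.toLinearMap) μ =
      |LinearMap.det (e.symm : E →ₗ[ℝ] E)| * ZLattice.covolume L μ := by
  let b := Module.Free.chooseBasis ℤ L
  have hmap : (b.ofZLatticeComap ℝ L e.toLinearEquiv).ofZLatticeBasis ℝ =
      (b.ofZLatticeBasis ℝ L).map e.symm.toLinearEquiv := by
    ext; simp
  rw [ZLattice.covolume_eq_measure_fundamentalDomain _ _ (ZLattice.isAddFundamentalDomain b μ),
    ZLattice.covolume_eq_measure_fundamentalDomain _ _ (ZLattice.isAddFundamentalDomain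
      (b.ofZLatticeComap ℝ L e.toLinearEquiv) μ), hmap, ← ZSpan.map_fundamentalDomain,
    measureReal_def, measureReal_def, show (⇑e.symm.toLinearEquiv) = ⇑(e.symm : E →ₗ[ℝ] E) from rfl,
    Measure.addHaar_image_linearMap, ENNReal.toReal_mul, ENNReal.toReal_ofReal (abs_nonneg _)]

lemma covolume_smul [DiscreteTopology L] [IsZLattice ℝ L] (μ : Measure E) [μ.IsAddHaarMeasure]
    (hs : s ≠ 0) : ZLattice.covolume (s • L : Submodule ℤ E) μ =
      |s| ^ Module.finrank ℝ E * ZLattice.covolume L μ := by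
  have hdet : LinearMap.det ((ContinuousLinearEquiv.smulLeft (Units.mk0 s hs)⁻¹ : E ≃L[ℝ] E).symm :
      E →ₗ[ℝ] E) = s ^ Module.finrank ℝ E := by
    rw [← mul_one (s ^ _), ← LinearMap.det_id (M := E) (A := ℝ), ← LinearMap.det_smul]
    rfl
  simp only [smul_eq_zlatticeComap L hs, covolume_zlatticeComap, hdet, abs_pow]

end Scaling

section RadialMoments

variable {b : ℝ}

lemma integrableOn_Ioi_pow_mul_exp_neg_mul_sq (hb : 0 < b) (m : ℕ) :
    IntegrableOn (fun y : ℝ => y ^ m * Real.exp (-b * y ^ 2)) (Set.Ioi 0) := by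
  simpa only [rpow_natCast] using integrableOn_rpow_mul_exp_neg_mul_sq hb
    (by linarith [Nat.cast_nonneg (α := ℝ) m] : (-1 : ℝ) < m)

lemma integral_Ioi_pow_add_two_mul_exp_neg_mul_sq (hb : 0 < b) (m : ℕ) :
    ∫ y in Set.Ioi (0 : ℝ), y ^ (m + 2) * Real.exp (-b * y ^ 2) =
      (m + 1) / (2 * b) * ∫ y in Set.Ioi (0 : ℝ), y ^ m * Real.exp (-b * y ^ 2) := by
  have gamma_form (k : ℕ) : ∫ y in Set.Ioi (0 : ℝ), y ^ k * Real.exp (-b * y ^ 2) =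
      b ^ (-((k : ℝ) + 1) / 2) * (1 / 2) * Gamma ((k + 1) / 2) := by
    simpa only [rpow_natCast, rpow_two] using integral_rpow_mul_exp_neg_mul_rpow (p := 2)
      two_pos (by linarith [Nat.cast_nonneg (α := ℝ) k] : (-1 : ℝ) < k) hb
  have hGamma : Gamma (((m + 2 : ℕ) + 1 : ℝ) / 2) = (m + 1) / 2 * Gamma ((m + 1) / 2) := by
    rw [← Gamma_add_one (by positivity)]
    push_cast
    ring_nf
  have hpow : b ^ (-((m + 2 : ℕ) + 1 : ℝ) / 2) = b ^ (-((m : ℝ) + 1) / 2) * b⁻¹ := by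
    rw [← rpow_neg_one, ← rpow_add hb]
    push_cast
    ring_nf
  rw [gamma_form, gamma_form, hGamma, hpow]
  ring

variable {E : Type*} [NormedAddCommGroup E] [NormedSpace ℝ E] [Nontrivial E]
  [FiniteDimensional ℝ E] [MeasurableSpace E] [BorelSpace E] (μ : Measure E) [μ.IsAddHaarMeasure]

lemma integrable_norm_pow_mul_exp_neg_mul_sq (hb : 0 < b) (k : ℕ) :
    Integrable (fun x => ‖x‖ ^ k * Real.exp (-b * ‖x‖ ^ 2)) μ := by
  rw [integrable_fun_norm_addHaar μ (f := fun y => y ^ k * Real.exp (-b * y ^ 2))]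
  simpa only [smul_eq_mul, ← mul_assoc, ← pow_add] using
    integrableOn_Ioi_pow_mul_exp_neg_mul_sq hb (Module.finrank ℝ E - 1 + k)

lemma integral_norm_pow_add_two_mul_exp_neg_mul_sq (hb : 0 < b) (k : ℕ) :
    ∫ x, ‖x‖ ^ (k + 2) * Real.exp (-b * ‖x‖ ^ 2) ∂μ =
      (Module.finrank ℝ E + k) / (2 * b) * ∫ x, ‖x‖ ^ k * Real.exp (-b * ‖x‖ ^ 2) ∂μ := by
  have hdim : ((Module.finrank ℝ E - 1 + k : ℕ) + 1 : ℝ) = Module.finrank ℝ E + k := by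
    rw [Nat.cast_add, Nat.cast_sub Module.finrank_pos]
    ring
  have radial (j : ℕ) := integral_fun_norm_addHaar μ fun y => y ^ j * Real.exp (-b * y ^ 2)
  simp only [smul_eq_mul, nsmul_eq_mul, ← mul_assoc, ← pow_add] at radial
  rw [radial, radial, ← add_assoc, integral_Ioi_pow_add_two_mul_exp_neg_mul_sq hb, hdim]
  ring

end RadialMoments

section GaussianDensity

variable {n : ℕ} {σ : ℝ}

lemma gaussF_eq_mul_exp_neg_mul_sq (x : EuclideanSpace ℝ (Fin n)) : gaussF n σ x =
    (2 * π * σ ^ 2) ^ (-(n : ℝ) / 2) * Real.exp (-(1 / (2 * σ ^ 2)) * ‖x‖ ^ 2) := by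
  unfold gaussF
  ring_nf

lemma gaussF_pos (hσ : 0 < σ) (x : EuclideanSpace ℝ (Fin n)) : 0 < gaussF n σ x := by
  unfold gaussF
  positivity

lemma continuous_gaussF : Continuous (gaussF n σ) := by
  unfold gaussF
  fun_prop

lemma measurable_ofReal_gaussF : Measurable fun x => ENNReal.ofReal (gaussF n σ x) :=
  continuous_gaussF.measurable.ennreal_ofReal

lemma gaussF_normalization (hσ : 0 < σ) :
    (2 * π * σ ^ 2) ^ (-(n : ℝ) / 2) * (π / (1 / (2 * σ ^ 2))) ^ ((n : ℝ) / 2) = 1 := by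
  have hp : 0 < 2 * π * σ ^ 2 := by positivity
  rw [show π / (1 / (2 * σ ^ 2)) = 2 * π * σ ^ 2 by field_simp, ← rpow_add hp, neg_div,
    neg_add_cancel, rpow_zero]

lemma integral_gaussF (hσ : 0 < σ) : ∫ x, gaussF n σ x = 1 := by
  simp_rw [gaussF_eq_mul_exp_neg_mul_sq]
  rw [integral_const_mul, GaussianFourier.integral_rexp_neg_mul_sq_norm (by positivity),
    finrank_euclideanSpace_fin, gaussF_normalization hσ]

lemma integrable_gaussF (hσ : 0 < σ) : Integrable (gaussF n σ) :=
  .of_integral_ne_zero (by rw [integral_gaussF hσ]; exact one_ne_zero)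

lemma lintegral_gaussF (hσ : 0 < σ) : ∫⁻ x, ENNReal.ofReal (gaussF n σ x) = 1 := by
  rw [← ofReal_integral_eq_lintegral_ofReal (integrable_gaussF hσ)
    (.of_forall fun x => (gaussF_pos hσ x).le), integral_gaussF hσ, ENNReal.ofReal_one]

lemma isProbabilityMeasure_gaussMeasure (hσ : 0 < σ) :
    IsProbabilityMeasure (gaussMeasure n σ) :=
  ⟨by rw [gaussMeasure, withDensity_apply _ .univ, Measure.restrict_univ, lintegral_gaussF hσ]⟩

lemma integral_gaussMeasure {F : Type*} [NormedAddCommGroup F] [NormedSpace ℝ F] (hσ : 0 < σ)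
    (g : EuclideanSpace ℝ (Fin n) → F) :
    ∫ x, g x ∂(gaussMeasure n σ) = ∫ x, gaussF n σ x • g x := by
  rw [gaussMeasure, integral_withDensity_eq_integral_toReal_smul measurable_ofReal_gaussF
    (.of_forall fun x => ENNReal.ofReal_lt_top)]
  simp_rw [ENNReal.toReal_ofReal (gaussF_pos hσ _).le]

lemma lintegral_gaussMeasure_ofReal (hσ : 0 < σ) {g : EuclideanSpace ℝ (Fin n) → ℝ}
    (hg : Measurable g) (hg0 : ∀ x, 0 ≤ g x) (hint : Integrable fun x => g x * gaussF n σ x) :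
    ∫⁻ x, ENNReal.ofReal (g x) ∂(gaussMeasure n σ) =
      ENNReal.ofReal (∫ x, g x * gaussF n σ x) := by
  rw [gaussMeasure, lintegral_withDensity_eq_lintegral_mul _ measurable_ofReal_gaussF
    hg.ennreal_ofReal, ofReal_integral_eq_lintegral_ofReal hint
    (.of_forall fun x => mul_nonneg (hg0 x) (gaussF_pos hσ x).le)]
  refine lintegral_congr fun x => ?_
  rw [Pi.mul_apply, ← ENNReal.ofReal_mul (gaussF_pos hσ x).le, mul_comm]

lemma setIntegral_gaussF (hσ : 0 < σ) {A : Set (EuclideanSpace ℝ (Fin n))}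
    (hA : MeasurableSet A) : ∫ x in A, gaussF n σ x = (gaussMeasure n σ A).toReal := by
  rw [gaussMeasure, withDensity_apply _ hA,
    integral_eq_lintegral_of_nonneg_ae (.of_forall fun x => (gaussF_pos hσ x).le)
      continuous_gaussF.aestronglyMeasurable]

lemma charFun_gaussMeasure (hσ : 0 < σ) (ξ : EuclideanSpace ℝ (Fin n)) :
    charFun (gaussMeasure n σ) ξ = Complex.exp (-(σ ^ 2 * ‖ξ‖ ^ 2 / 2 : ℝ)) := by
  have hb : 0 < ((1 / (2 * σ ^ 2) : ℝ) : ℂ).re := by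
    rw [Complex.ofReal_re]; positivity
  have density_mul_character (x : EuclideanSpace ℝ (Fin n)) :
      gaussF n σ x • Complex.exp (⟪x, ξ⟫ * Complex.I) =
      ((2 * π * σ ^ 2) ^ (-(n : ℝ) / 2) : ℝ) *
        Complex.exp (-((1 / (2 * σ ^ 2) : ℝ) : ℂ) * ‖x‖ ^ 2 + Complex.I * ⟪ξ, x⟫) := by
    rw [gaussF_eq_mul_exp_neg_mul_sq, Complex.exp_add, real_inner_comm, Complex.real_smul]
    push_cast
    ring_nf
  have hconst : (((2 * π * σ ^ 2) ^ (-(n : ℝ) / 2) : ℝ) : ℂ) *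
      ((π : ℂ) / ((1 / (2 * σ ^ 2) : ℝ) : ℂ)) ^
        ((Module.finrank ℝ (EuclideanSpace ℝ (Fin n)) : ℂ) / 2) = 1 := by
    rw [finrank_euclideanSpace_fin, ← Complex.ofReal_div,
      show ((n : ℂ) / 2) = (((n : ℝ) / 2 : ℝ) : ℂ) by push_cast; rfl,
      ← Complex.ofReal_cpow (by positivity), ← Complex.ofReal_mul, gaussF_normalization hσ,
      Complex.ofReal_one]
  have hσ' : (σ : ℂ) ≠ 0 := by exact_mod_cast hσ.ne'
  rw [charFun_apply, integral_gaussMeasure hσ]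
  simp_rw [density_mul_character]
  rw [integral_const_mul, GaussianFourier.integral_cexp_neg_mul_sq_norm_add hb, ← mul_assoc,
    hconst, one_mul, Complex.I_sq]
  congr 1
  push_cast
  field_simp
  norm_num

lemma gaussMeasure_map_smul (hσ : 0 < σ) {a : ℝ} (ha : 0 < a) :
    (gaussMeasure n σ).map (fun x => a • x) = gaussMeasure n (a * σ) := by
  have := isProbabilityMeasure_gaussMeasure (n := n) hσ
  have := isProbabilityMeasure_gaussMeasure (n := n) (mul_pos ha hσ)
  refine Measure.ext_of_charFun (funext fun ξ => ?_)
  rw [charFun_map_smul, charFun_gaussMeasure hσ, charFun_gaussMeasure (mul_pos ha hσ),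
    norm_smul, mul_pow, mul_pow, norm_eq_abs, sq_abs]
  ring_nf

lemma gaussMeasure_map_smul_add_smul {τ ρ a b : ℝ} (hσ : 0 < σ) (hτ : 0 < τ) (hρ : 0 < ρ)
    (h : a ^ 2 * σ ^ 2 + b ^ 2 * τ ^ 2 = ρ ^ 2) :
    ((gaussMeasure n σ).prod (gaussMeasure n τ)).map (fun p => a • p.1 + b • p.2) =
      gaussMeasure n ρ := by
  have := isProbabilityMeasure_gaussMeasure (n := n) hσ
  have := isProbabilityMeasure_gaussMeasure (n := n) hτ
  have := isProbabilityMeasure_gaussMeasure (n := n) hρ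
  have hconv : ((gaussMeasure n σ).prod (gaussMeasure n τ)).map (fun p => a • p.1 + b • p.2) =
      ((gaussMeasure n σ).map (fun x => a • x)) ∗ ((gaussMeasure n τ).map (fun x => b • x)) := by
    rw [Measure.conv, Measure.map_prod_map _ _ (by fun_prop) (by fun_prop),
      Measure.map_map (by fun_prop) (by fun_prop)]
    rfl
  rw [hconv]
  refine Measure.ext_of_charFun (funext fun ξ => ?_)
  rw [charFun_conv, charFun_map_smul, charFun_map_smul, charFun_gaussMeasure hσ,
    charFun_gaussMeasure hτ, charFun_gaussMeasure hρ, ← Complex.exp_add, norm_smul, norm_smul,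
    ← h, mul_pow, mul_pow, norm_eq_abs, norm_eq_abs, sq_abs, sq_abs]
  push_cast
  ring_nf

lemma integrable_norm_pow_mul_gaussF (hn : 0 < n) (hσ : 0 < σ) (k : ℕ) :
    Integrable fun x => ‖x‖ ^ k * gaussF n σ x := by
  have : Nonempty (Fin n) := ⟨⟨0, hn⟩⟩
  simp_rw [gaussF_eq_mul_exp_neg_mul_sq, mul_left_comm]
  exact (integrable_norm_pow_mul_exp_neg_mul_sq volume (by positivity) k).const_mul _

lemma integral_norm_pow_add_two_mul_gaussF (hn : 0 < n) (hσ : 0 < σ) (k : ℕ) :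
    ∫ x, ‖x‖ ^ (k + 2) * gaussF n σ x = (n + k) * σ ^ 2 * ∫ x, ‖x‖ ^ k * gaussF n σ x := by
  have : Nonempty (Fin n) := ⟨⟨0, hn⟩⟩
  simp_rw [gaussF_eq_mul_exp_neg_mul_sq, mul_left_comm]
  rw [integral_const_mul, integral_const_mul,
    integral_norm_pow_add_two_mul_exp_neg_mul_sq volume (by positivity), finrank_euclideanSpace_fin]
  field_simp

lemma sq_norm_sub_sq_mul_gaussF (m : ℝ) : (fun x => (‖x‖ ^ 2 - m) ^ 2 * gaussF n σ x) = fun x =>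
    ‖x‖ ^ 4 * gaussF n σ x - 2 * m * (‖x‖ ^ 2 * gaussF n σ x) + m ^ 2 * gaussF n σ x := by
  ext x; ring

lemma integrable_sq_norm_sub_sq_mul_gaussF (hn : 0 < n) (hσ : 0 < σ) (m : ℝ) :
    Integrable fun x => (‖x‖ ^ 2 - m) ^ 2 * gaussF n σ x := by
  rw [sq_norm_sub_sq_mul_gaussF]
  exact ((integrable_norm_pow_mul_gaussF hn hσ 4).sub
    ((integrable_norm_pow_mul_gaussF hn hσ 2).const_mul _)).add ((integrable_gaussF hσ).const_mul _)

lemma integral_variance_sq_norm_gaussF (hn : 0 < n) (hσ : 0 < σ) :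
    ∫ x, (‖x‖ ^ 2 - n * σ ^ 2) ^ 2 * gaussF n σ x = 2 * n * σ ^ 4 := by
  have h0 := (integrable_gaussF (n := n) hσ).const_mul ((n * σ ^ 2) ^ 2)
  have h2 := (integrable_norm_pow_mul_gaussF hn hσ 2).const_mul (2 * (n * σ ^ 2))
  have h4 := integrable_norm_pow_mul_gaussF hn hσ 4
  have second_moment : ∫ x, ‖x‖ ^ 2 * gaussF n σ x = n * σ ^ 2 := by
    simpa [integral_gaussF hσ] using integral_norm_pow_add_two_mul_gaussF hn hσ 0
  have fourth_moment : ∫ x, ‖x‖ ^ 4 * gaussF n σ x = (n + 2) * σ ^ 2 * (n * σ ^ 2) := by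
    simpa [second_moment] using integral_norm_pow_add_two_mul_gaussF hn hσ 2
  rw [sq_norm_sub_sq_mul_gaussF, integral_add (by exact h4.sub h2) h0, integral_sub h4 h2,
    integral_const_mul, integral_const_mul, integral_gaussF hσ, second_moment, fourth_moment]
  ring

end GaussianDensity

section Quantile

variable {X : Type*} [MeasurableSpace X] {μ : Measure X} [IsProbabilityMeasure μ] {K : ℝ → Set X}

lemma exists_pos_measure_compl_le (hmono : Monotone K) (hmeas : ∀ s, MeasurableSet (K s))
    (hunion : ⋃ s, K s = Set.univ) {c : ℝ≥0∞} (hc : 0 < c) : ∃ s, 0 < s ∧ μ (K s)ᶜ ≤ c := by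
  have hlim : Tendsto (fun s => μ (K s)ᶜ) atTop (nhds 0) := by
    have h := tendsto_measure_iInter_atTop (μ := μ) (s := fun s => (K s)ᶜ)
      (fun s => (hmeas s).compl.nullMeasurableSet)
      (fun s t hst => Set.compl_subset_compl.2 (hmono hst)) ⟨0, measure_ne_top _ _⟩
    rwa [← Set.compl_iUnion, hunion, Set.compl_univ, measure_empty] at h
  obtain ⟨s, hs, hs0⟩ := ((hlim.eventually_lt_const hc).and (eventually_gt_atTop 0)).exists
  exact ⟨s, hs0, hs.le⟩

lemma measure_compl_le_of_forall_gt (hmono : Monotone K) (hmeas : ∀ s, MeasurableSet (K s))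
    {s : ℝ} (hright : ⋂ r > s, K r ⊆ K s) {c : ℝ≥0∞} (h : ∀ r > s, μ (K r)ᶜ ≤ c) :
    μ (K s)ᶜ ≤ c := by
  have hlim : Tendsto (fun r => μ (K r)) (nhdsWithin s (Set.Ioi s)) (nhds (μ (⋂ r > s, K r))) :=
    tendsto_measure_biInter_gt (fun r _ => (hmeas r).nullMeasurableSet)
      (fun _ _ _ hij => hmono hij) ⟨s + 1, by linarith, measure_ne_top _ _⟩
  have hle : μ (K s)ᶜ ≤ 1 - μ (⋂ r > s, K r) := by
    rw [prob_compl_eq_one_sub (hmeas s)]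
    exact tsub_le_tsub_left (measure_mono hright) 1
  refine hle.trans (le_of_tendsto (ENNReal.Tendsto.sub tendsto_const_nhds hlim (.inl
    ENNReal.one_ne_top)) (eventually_mem_nhdsWithin.mono fun r hr => ?_))
  rw [← prob_compl_eq_one_sub (hmeas r)]
  exact h r hr

lemma sInf_mem_setOf_measure_compl_le (hmono : Monotone K) (hmeas : ∀ s, MeasurableSet (K s))
    (hunion : ⋃ s, K s = Set.univ) (hright : ∀ s, ⋂ r > s, K r ⊆ K s) {c : ℝ≥0∞} (hc : 0 < c)
    (hzero : c < μ (K 0)ᶜ) :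
    sInf {s | 0 < s ∧ μ (K s)ᶜ ≤ c} ∈ {s | 0 < s ∧ μ (K s)ᶜ ≤ c} := by
  have hne : {s | 0 < s ∧ μ (K s)ᶜ ≤ c}.Nonempty :=
    exists_pos_measure_compl_le hmono hmeas hunion hc
  have hle : μ (K (sInf {s | 0 < s ∧ μ (K s)ᶜ ≤ c}))ᶜ ≤ c := by
    refine measure_compl_le_of_forall_gt hmono hmeas (hright _) fun r hr => ?_
    obtain ⟨t, ht, htr⟩ := exists_lt_of_csInf_lt hne hr
    exact (measure_mono (Set.compl_subset_compl.2 (hmono htr.le))).trans ht.2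
  refine ⟨(le_csInf hne fun s hs => hs.1.le).lt_of_ne fun h0 => ?_, hle⟩
  exact hzero.not_ge (h0 ▸ hle)

end Quantile

section Voronoi

lemma exists_pos_forall_le_norm {E : Type*} [NormedAddCommGroup E] (L : Submodule ℤ E)
    [DiscreteTopology L] : ∃ r > 0, ∀ y ∈ L, y ≠ 0 → r ≤ ‖y‖ := by
  obtain ⟨r, hr, hball⟩ := Metric.exists_ball_inter_eq_singleton_of_mem_discrete
    (SetLike.isDiscrete_iff_discreteTopology.2 ‹_› : IsDiscrete (L : Set E)) L.zero_mem
  refine ⟨r, hr, fun y hy hy0 => not_lt.1 fun hlt => hy0 ?_⟩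
  exact hball.subset ⟨mem_ball_zero_iff.2 hlt, hy⟩

variable {E : Type*} [NormedAddCommGroup E] [InnerProductSpace ℝ E]

/-- The dilate `s · V(S)` of the Voronoi cell of `S`, in the form of linear inequalities, which
also makes sense for `s ≤ 0`. -/
def voronoiDilate (S : Set E) (s : ℝ) : Set E := {x | ∀ y ∈ S, ⟪x, y⟫ ≤ s * (‖y‖ ^ 2 / 2)}

lemma smul_voronoi {n : ℕ} (S : Set (EuclideanSpace ℝ (Fin n))) {s : ℝ} (hs : 0 < s) :
    s • voronoi n S = voronoiDilate S s := by
  ext x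
  rw [Set.mem_smul_set_iff_inv_smul_mem₀ hs.ne']
  simp only [voronoi, voronoiDilate, Set.mem_ofPred_eq, real_inner_smul_left, inv_mul_le_iff₀ hs]

lemma isClosed_voronoiDilate (S : Set E) (s : ℝ) : IsClosed (voronoiDilate S s) := by
  simp only [voronoiDilate, Set.ofPred_forall]
  exact isClosed_biInter fun y _ => isClosed_le (by fun_prop) continuous_const

lemma monotone_voronoiDilate (S : Set E) : Monotone (voronoiDilate S) := fun _ _ hst _ hx y hy =>
  (hx y hy).trans (mul_le_mul_of_nonneg_right hst (by positivity))

lemma biInter_gt_voronoiDilate_subset (S : Set E) (s : ℝ) :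
    ⋂ r > s, voronoiDilate S r ⊆ voronoiDilate S s := by
  intro x hx y hy
  have hlim : Tendsto (fun r => r * (‖y‖ ^ 2 / 2)) (nhdsWithin s (Set.Ioi s))
      (nhds (s * (‖y‖ ^ 2 / 2))) :=
    ((continuous_id.mul continuous_const).tendsto s).mono_left nhdsWithin_le_nhds
  exact ge_of_tendsto hlim
    (eventually_mem_nhdsWithin.mono fun r hr => Set.mem_iInter₂.1 hx r hr y hy)

variable (L : Submodule ℤ E)

lemma iUnion_voronoiDilate [DiscreteTopology L] :
    ⋃ s, voronoiDilate (L : Set E) s = Set.univ := by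
  obtain ⟨r, hr, hsep⟩ := exists_pos_forall_le_norm L
  refine Set.eq_univ_of_forall fun x => Set.mem_iUnion.2 ⟨2 * ‖x‖ / r, fun y hy => ?_⟩
  rcases eq_or_ne y 0 with rfl | hy0
  · simp
  calc ⟪x, y⟫ ≤ ‖x‖ * ‖y‖ := real_inner_le_norm x y
    _ ≤ ‖x‖ * ‖y‖ * (‖y‖ / r) :=
      le_mul_of_one_le_right (by positivity) ((one_le_div hr).2 (hsep y hy hy0))
    _ = 2 * ‖x‖ / r * (‖y‖ ^ 2 / 2) := by ring

lemma voronoiDilate_zero_subset (hL : Submodule.span ℝ (L : Set E) = ⊤) :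
    voronoiDilate (L : Set E) 0 ⊆ {0} := by
  intro x hx
  have horth : Submodule.span ℝ (L : Set E) ≤ (ℝ ∙ x)ᗮ := Submodule.span_le.2 fun y hy => by
    have hpos := hx y hy
    have hneg := hx (-y) (L.neg_mem hy)
    rw [inner_neg_right] at hneg
    exact Submodule.mem_orthogonal_singleton_iff_inner_right.2 (by linarith)
  rw [hL] at horth
  exact inner_self_eq_zero.1
    (Submodule.mem_orthogonal_singleton_iff_inner_right.1 (horth (Submodule.mem_top (x := x))))

end Voronoi

section InverseError

variable {n : ℕ} (L : Submodule ℤ (EuclideanSpace ℝ (Fin n))) [DiscreteTopology L] [IsZLattice ℝ L]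

lemma gaussMeasure_compl_singleton (hn : 0 < n) {σ : ℝ} (hσ : 0 < σ)
    (x : EuclideanSpace ℝ (Fin n)) : gaussMeasure n σ {x}ᶜ = 1 := by
  have := isProbabilityMeasure_gaussMeasure (n := n) hσ
  have : Nonempty (Fin n) := ⟨⟨0, hn⟩⟩
  rw [prob_compl_eq_one_iff (measurableSet_singleton x)]
  exact withDensity_absolutelyContinuous _ _ (measure_singleton x)

lemma errInv_mem (hn : 0 < n) {ε : ℝ} (hε0 : 0 < ε) (hε1 : ε < 1) :
    errInv n ε L ∈ {s : ℝ | 0 < s ∧ gaussMeasure n 1 ((s • voronoi n L)ᶜ) ≤ ENNReal.ofReal ε} := by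
  have := isProbabilityMeasure_gaussMeasure (n := n) one_pos
  have hzero : ENNReal.ofReal ε < gaussMeasure n 1 (voronoiDilate (L : Set _) 0)ᶜ := by
    refine (ENNReal.ofReal_lt_one.2 hε1).trans_le ?_
    rw [← gaussMeasure_compl_singleton hn one_pos 0]
    exact measure_mono (Set.compl_subset_compl.2
      (voronoiDilate_zero_subset L (IsZLattice.span_top (K := ℝ))))
  have hset : {s : ℝ | 0 < s ∧ gaussMeasure n 1 ((s • voronoi n L)ᶜ) ≤ ENNReal.ofReal ε} =
      {s | 0 < s ∧ gaussMeasure n 1 (voronoiDilate (L : Set _) s)ᶜ ≤ ENNReal.ofReal ε} :=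
    Set.ext fun s => and_congr_right fun hs => by rw [smul_voronoi _ hs]
  rw [errInv, hset]
  exact sInf_mem_setOf_measure_compl_le (monotone_voronoiDilate _)
    (fun s => (isClosed_voronoiDilate _ s).measurableSet) (iUnion_voronoiDilate L)
    (biInter_gt_voronoiDilate_subset _) (ENNReal.ofReal_pos.2 hε0) hzero

lemma gaussMeasure_mul_smul_set {σ a : ℝ} (hσ : 0 < σ) (ha : 0 < a)
    (A : Set (EuclideanSpace ℝ (Fin n))) :
    gaussMeasure n (a * σ) (a • A) = gaussMeasure n σ A := by
  rw [← gaussMeasure_map_smul hσ ha]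
  refine ((Homeomorph.smulOfNeZero a ha.ne').measurableEmbedding.map_apply _ _).trans ?_
  exact congrArg _ (Set.preimage_image_eq A (smul_right_injective _ ha.ne'))

lemma gaussMeasure_compl_errInv_mul_smul_voronoi_le (hn : 0 < n) {σ ε : ℝ} (hσ : 0 < σ)
    (hε0 : 0 < ε) (hε1 : ε < 1) :
    gaussMeasure n σ ((errInv n ε L * σ) • voronoi n L)ᶜ ≤ ENNReal.ofReal ε := by
  have hcompl : σ • (errInv n ε L • voronoi n L)ᶜ = (σ • errInv n ε L • voronoi n L)ᶜ :=
    Set.image_compl_eq (MulAction.bijective₀ hσ.ne')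
  rw [mul_comm, mul_smul, ← hcompl]
  simpa only [mul_one] using
    (gaussMeasure_mul_smul_set one_pos hσ _).trans_le (errInv_mem L hn hε0 hε1).2

end InverseError

section WeightedMean

variable {ι : Type*} {p Y : ι → ℝ} {m : ℝ}

lemma summable_mul_of_summable_mul_sub_sq (hp : ∀ i, 0 ≤ p i) (hps : Summable p)
    (hv : Summable fun i => p i * (Y i - m) ^ 2) : Summable fun i => p i * Y i := by
  refine .of_norm_bounded (hv.add (hps.mul_left (|m| + 1))) fun i => ?_
  rw [norm_mul, norm_of_nonneg (hp i), mul_comm (|m| + 1), ← mul_add]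
  refine mul_le_mul_of_nonneg_left ?_ (hp i)
  calc ‖Y i‖ = |(Y i - m) + m| := by rw [sub_add_cancel, norm_eq_abs]
    _ ≤ |Y i - m| + |m| := abs_add_le _ _
    _ ≤ (Y i - m) ^ 2 + (|m| + 1) := by
      rw [← sq_abs (Y i - m)]
      nlinarith [sq_nonneg (|Y i - m| - 1), abs_nonneg (Y i - m)]

lemma sq_tsum_mul_sub_le_tsum_mul_sub_sq (hp : ∀ i, 0 ≤ p i) (hp1 : HasSum p 1)
    (hv : Summable fun i => p i * (Y i - m) ^ 2) :
    (∑' i, p i * Y i - m) ^ 2 ≤ ∑' i, p i * (Y i - m) ^ 2 := by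
  set a := ∑' i, p i * Y i
  have hY : HasSum (fun i => p i * Y i) a :=
    (summable_mul_of_summable_mul_sub_sq hp hp1.summable hv).hasSum
  have hcentered : HasSum (fun i => p i * (Y i - a) ^ 2)
      (∑' i, p i * (Y i - m) ^ 2 - 2 * (a - m) * a + (a ^ 2 - m ^ 2) * 1) :=
    ((hv.hasSum.sub (hY.mul_left (2 * (a - m)))).add (hp1.mul_left (a ^ 2 - m ^ 2))).congr_fun
      fun i => by ring
  have hnonneg := hcentered.nonneg fun i => mul_nonneg (hp i) (sq_nonneg (Y i - a))
  linarith

end WeightedMean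

lemma summable_and_tsum_le_of_tsum_ofReal_le {ι : Type*} {f : ι → ℝ} {a : ℝ} (hf : ∀ i, 0 ≤ f i)
    (ha : 0 ≤ a) (h : ∑' i, ENNReal.ofReal (f i) ≤ ENNReal.ofReal a) :
    Summable f ∧ ∑' i, f i ≤ a := by
  have hs : Summable f := (ENNReal.summable_toReal (h.trans_lt ENNReal.ofReal_lt_top).ne).congr
    fun i => ENNReal.toReal_ofReal (hf i)
  rw [← ENNReal.ofReal_tsum_of_nonneg hf hs] at h
  exact ⟨hs, (ENNReal.ofReal_le_ofReal_iff ha).1 h⟩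

section DiscreteGaussian

variable {n : ℕ} {σ : ℝ} {S : Set (EuclideanSpace ℝ (Fin n))}

/-- The probability `f_σ(x) / f_σ(S)` of `x` under the discrete Gaussian `D_{S,σ}`. -/
def dgProb (n : ℕ) (σ : ℝ) (S : Set (EuclideanSpace ℝ (Fin n))) (x : EuclideanSpace ℝ (Fin n)) :
    ℝ := gaussF n σ x / gaussMass n σ S

/-- The expectation `E[g(X)]` for `X ~ D_{S,σ}`; being a `tsum`, it is only meaningful together
with the summability of its terms. -/
def dgMean (n : ℕ) (σ : ℝ) (S : Set (EuclideanSpace ℝ (Fin n)))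
    (g : EuclideanSpace ℝ (Fin n) → ℝ) : ℝ := ∑' x : S, dgProb n σ S x * g x

lemma gaussMass_pos (hσ : 0 < σ) (hS : S.Nonempty) (hs : Summable fun y : S => gaussF n σ y) :
    0 < gaussMass n σ S := by
  obtain ⟨x, hx⟩ := hS
  rw [gaussMass]
  exact hs.tsum_pos (fun y => (gaussF_pos hσ y.1).le) ⟨x, hx⟩ (gaussF_pos hσ x)

lemma dgProb_nonneg (hσ : 0 < σ) (x : EuclideanSpace ℝ (Fin n)) : 0 ≤ dgProb n σ S x := by
  rw [dgProb, gaussMass]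
  exact div_nonneg (gaussF_pos hσ x).le (tsum_nonneg fun y => (gaussF_pos hσ y.1).le)

lemma hasSum_dgProb (hσ : 0 < σ) (hS : S.Nonempty) (hs : Summable fun y : S => gaussF n σ y) :
    HasSum (fun y : S => dgProb n σ S y) 1 := by
  rw [← div_self (gaussMass_pos hσ hS hs).ne']
  exact hs.hasSum.div_const (gaussMass n σ S)

lemma log_dgProb (hσ : 0 < σ) (hpos : 0 < gaussMass n σ S) (x : EuclideanSpace ℝ (Fin n)) :
    Real.log (dgProb n σ S x) = -(n / 2 * Real.log (2 * π * σ ^ 2) + Real.log (gaussMass n σ S)) -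
      ‖x‖ ^ 2 / (2 * σ ^ 2) := by
  have hp : 0 < 2 * π * σ ^ 2 := by positivity
  rw [dgProb, Real.log_div (gaussF_pos hσ x).ne' hpos.ne', gaussF,
    Real.log_mul (Real.rpow_pos_of_pos hp _).ne' (Real.exp_pos _).ne', Real.log_exp,
    Real.log_rpow hp]
  ring

lemma dgEntropy_eq (hσ : 0 < σ) (hS : S.Nonempty) (hs : Summable fun y : S => gaussF n σ y)
    (hsq : Summable fun y : S => dgProb n σ S y * ‖(y : EuclideanSpace ℝ (Fin n))‖ ^ 2) :
    dgEntropy n σ S = n / 2 * Real.log (2 * π * σ ^ 2) +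
      dgMean n σ S (fun y => ‖y‖ ^ 2) / (2 * σ ^ 2) + Real.log (gaussMass n σ S) := by
  have hsum := ((hasSum_dgProb hσ hS hs).mul_right
    (-(n / 2 * Real.log (2 * π * σ ^ 2) + Real.log (gaussMass n σ S)))).sub
    (hsq.hasSum.div_const (2 * σ ^ 2))
  have hent : dgEntropy n σ S = -∑' y : S, dgProb n σ S y * Real.log (dgProb n σ S y) := rfl
  simp_rw [hent, log_dgProb hσ (gaussMass_pos hσ hS hs), mul_sub, ← mul_div_assoc]
  rw [hsum.tsum_eq, dgMean]
  ring

lemma tsum_ofReal_gaussF_mul_div (hσ : 0 < σ) (hS : S.Nonempty)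
    (hs : Summable fun y : S => gaussF n σ y) (g : EuclideanSpace ℝ (Fin n) → ℝ) :
    (∑' y : S, ENNReal.ofReal (gaussF n σ y) * ENNReal.ofReal (g y)) /
      ENNReal.ofReal (gaussMass n σ S) = ∑' y : S, ENNReal.ofReal (dgProb n σ S y * g y) := by
  rw [div_eq_mul_inv, ← ENNReal.tsum_mul_right]
  refine tsum_congr fun y => ?_
  rw [ENNReal.ofReal_mul (dgProb_nonneg hσ _), dgProb,
    ENNReal.ofReal_div_of_pos (gaussMass_pos hσ hS hs), div_eq_mul_inv, mul_right_comm]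

end DiscreteGaussian

section RandomCoset

variable {n : ℕ} {σ : ℝ} (M : Submodule ℤ (EuclideanSpace ℝ (Fin n)))

lemma coset_nonempty (t : EuclideanSpace ℝ (Fin n)) : (coset n (M : Set _) t).Nonempty :=
  ⟨t, by simp [coset]⟩

lemma orbitSum_eq_tsum_coset (f : EuclideanSpace ℝ (Fin n) → ℝ≥0∞)
    (t : EuclideanSpace ℝ (Fin n)) : orbitSum M f t = ∑' x : coset n (M : Set _) t, f x := by
  have hmem (y : EuclideanSpace ℝ (Fin n)) : y ∈ M ↔ y + t ∈ coset n (M : Set _) t := by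
    simp [coset]
  exact ((Equiv.addRight t).subtypeEquiv hmem).tsum_eq fun x => f x

instance : MeasurableConstVAdd M (EuclideanSpace ℝ (Fin n)) :=
  (inferInstance : MeasurableConstVAdd M.toAddSubgroup (EuclideanSpace ℝ (Fin n)))

instance : VAddInvariantMeasure M (EuclideanSpace ℝ (Fin n)) volume :=
  (inferInstance : VAddInvariantMeasure M.toAddSubgroup (EuclideanSpace ℝ (Fin n)) volume)

lemma summable_gaussF_of_orbitSum_ne_top (hσ : 0 < σ) {t : EuclideanSpace ℝ (Fin n)}
    (h : orbitSum M (fun x => ENNReal.ofReal (gaussF n σ x)) t ≠ ∞) :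
    Summable fun x : coset n (M : Set _) t => gaussF n σ x := by
  rw [orbitSum_eq_tsum_coset] at h
  exact (ENNReal.summable_toReal h).congr fun x => ENNReal.toReal_ofReal (gaussF_pos hσ x.1).le

lemma orbitSum_ofReal_gaussF (hσ : 0 < σ) {t : EuclideanSpace ℝ (Fin n)}
    (hs : Summable fun x : coset n (M : Set _) t => gaussF n σ x) :
    orbitSum M (fun x => ENNReal.ofReal (gaussF n σ x)) t =
      ENNReal.ofReal (gaussMass n σ (coset n (M : Set _) t)) := by
  rw [orbitSum_eq_tsum_coset, gaussMass, ENNReal.ofReal_tsum_of_nonneg _ hs]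
  exact fun x => (gaussF_pos hσ x.1).le

variable [DiscreteTopology M] [IsZLattice ℝ M]

lemma exists_isAddFundamentalDomain_measure_eq_covolume :
    ∃ D : Set (EuclideanSpace ℝ (Fin n)), IsAddFundamentalDomain M D volume ∧
      volume D = ENNReal.ofReal (ZLattice.covolume M volume) := by
  let b := Module.Free.chooseBasis ℤ M
  have hD := ZLattice.isAddFundamentalDomain b volume
  refine ⟨_, hD, ?_⟩
  rw [ZLattice.covolume_eq_measure_fundamentalDomain M volume hD,
    ofReal_measureReal (ZSpan.fundamentalDomain_isBounded _).measure_lt_top.ne]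

lemma ae_summable_gaussF_coset (hσ : 0 < σ) :
    ∀ᵐ t ∂(gaussMeasure n σ), Summable fun x : coset n (M : Set _) t => gaussF n σ x := by
  obtain ⟨D, hD, -⟩ := exists_isAddFundamentalDomain_measure_eq_covolume M
  have hfin := ae_orbitSum_ne_top hD (measurable_ofReal_gaussF (n := n) (σ := σ))
    (by rw [lintegral_gaussF hσ]; exact ENNReal.one_ne_top)
  exact (withDensity_absolutelyContinuous _ _).ae_le
    (hfin.mono fun t => summable_gaussF_of_orbitSum_ne_top M hσ)

lemma gaussMeasure_not_dgMean_le_le (hσ : 0 < σ) {g : EuclideanSpace ℝ (Fin n) → ℝ}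
    (hg : Measurable g) (hg0 : ∀ x, 0 ≤ g x) {a c : ℝ} (ha : 0 < a)
    (hmean : ∫⁻ x, ENNReal.ofReal (g x) ∂(gaussMeasure n σ) ≤ ENNReal.ofReal (c * a)) :
    gaussMeasure n σ {t | ¬((Summable fun x : coset n (M : Set _) t =>
      dgProb n σ (coset n (M : Set _) t) x * g x) ∧ dgMean n σ (coset n (M : Set _) t) g ≤ a)} ≤
        ENNReal.ofReal c := by
  obtain ⟨D, hD, -⟩ := exists_isAddFundamentalDomain_measure_eq_covolume M
  let F (x : EuclideanSpace ℝ (Fin n)) : ℝ≥0∞ := ENNReal.ofReal (gaussF n σ x)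
  let ratio (t : EuclideanSpace ℝ (Fin n)) : ℝ≥0∞ :=
    orbitSum M (fun x => F x * ENNReal.ofReal (g x)) t / orbitSum M F t
  have hF : Measurable F := measurable_ofReal_gaussF
  have hratio : Measurable ratio :=
    (measurable_orbitSum (hF.mul hg.ennreal_ofReal)).div (measurable_orbitSum hF)
  have markov : gaussMeasure n σ {t | ENNReal.ofReal a ≤ ratio t} ≤ ENNReal.ofReal c := by
    refine (meas_ge_le_lintegral_div hratio.aemeasurable (ENNReal.ofReal_pos.2 ha).ne'
      ENNReal.ofReal_ne_top).trans (ENNReal.div_le_of_le_mul ?_)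
    rw [← ENNReal.ofReal_mul' ha.le]
    exact (lintegral_orbitSum_div_orbitSum_le hD hF hg.ennreal_ofReal).trans hmean
  refine (measure_mono_ae ?_).trans markov
  filter_upwards [ae_summable_gaussF_coset M hσ] with t hs hbad
  by_contra hlt
  refine hbad (summable_and_tsum_le_of_tsum_ofReal_le
    (fun x => mul_nonneg (dgProb_nonneg hσ _) (hg0 _)) ha.le ?_)
  rw [← tsum_ofReal_gaussF_mul_div hσ (coset_nonempty M t) hs, ← orbitSum_ofReal_gaussF M hσ hs,
    ← orbitSum_eq_tsum_coset M fun x => ENNReal.ofReal (gaussF n σ x) * ENNReal.ofReal (g x)]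
  exact (not_le.1 hlt).le

lemma gaussMeasure_gaussMass_coset_lt_le (hσ : 0 < σ) {c : ℝ} (hc : 0 < c) :
    gaussMeasure n σ {t | gaussMass n σ (coset n (M : Set _) t) < c / ZLattice.covolume M volume} ≤
      ENNReal.ofReal c := by
  obtain ⟨D, hD, hvol⟩ := exists_isAddFundamentalDomain_measure_eq_covolume M
  have hcov := ZLattice.covolume_pos M volume
  have hlow := withDensity_orbitSum_lt_le hD (measurable_ofReal_gaussF (n := n) (σ := σ))
    (ENNReal.ofReal (c / ZLattice.covolume M volume))
  rw [hvol, ← ENNReal.ofReal_mul' hcov.le, div_mul_cancel₀ _ hcov.ne'] at hlow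
  refine (measure_mono_ae ?_).trans hlow
  filter_upwards [ae_summable_gaussF_coset M hσ] with t hs hlt
  change orbitSum M _ t < _
  rw [orbitSum_ofReal_gaussF M hσ hs]
  exact (ENNReal.ofReal_lt_ofReal_iff (div_pos hc hcov)).2 hlt

end RandomCoset

section TypicalCoset

variable {n : ℕ} {σ : ℝ}

lemma dgMean_sq_norm_le_and_le_dgEntropy {S : Set (EuclideanSpace ℝ (Fin n))} (hn : 0 < n)
    (hσ : 0 < σ) (hS : S.Nonempty) (hs : Summable fun y : S => gaussF n σ y) {δ a V : ℝ}
    (hδ : 0 ≤ δ) (hV : 0 < V) (hv : Summable fun y : S =>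
      dgProb n σ S y * (‖(y : EuclideanSpace ℝ (Fin n))‖ ^ 2 - n * σ ^ 2) ^ 2)
    (hvar : dgMean n σ S (fun y => (‖y‖ ^ 2 - n * σ ^ 2) ^ 2) ≤ (δ * (n * σ ^ 2)) ^ 2)
    (hmass : Real.exp (-a) / V ≤ gaussMass n σ S) :
    dgMean n σ S (fun y => ‖y‖ ^ 2) ≤ (1 + δ) * n * σ ^ 2 ∧
      1 / 2 * Real.log (2 * π * σ ^ 2) + 1 / 2 - 1 / n * Real.log V - (δ / 2 + a / n) ≤
        1 / n * dgEntropy n σ S := by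
  have hn' : (n : ℝ) ≠ 0 := Nat.cast_ne_zero.2 hn.ne'
  have hp := hasSum_dgProb hσ hS hs
  have hpower : |dgMean n σ S (fun y => ‖y‖ ^ 2) - n * σ ^ 2| ≤ δ * (n * σ ^ 2) :=
    abs_le_of_sq_le_sq ((sq_tsum_mul_sub_le_tsum_mul_sub_sq (fun _ => dgProb_nonneg hσ _)
      hp hv).trans hvar) (by positivity)
  obtain ⟨hlower, hupper⟩ := abs_le.1 hpower
  have hnorm : (1 - δ) * n / 2 ≤ dgMean n σ S (fun y => ‖y‖ ^ 2) / (2 * σ ^ 2) := by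
    rw [le_div_iff₀ (by positivity)]
    linarith
  have hlog : -a - Real.log V ≤ Real.log (gaussMass n σ S) := by
    rw [← Real.log_exp (-a), ← Real.log_div (Real.exp_pos _).ne' hV.ne']
    exact Real.log_le_log (by positivity) hmass
  refine ⟨by linarith, ?_⟩
  rw [dgEntropy_eq hσ hS hs (summable_mul_of_summable_mul_sub_sq (fun _ => dgProb_nonneg hσ _)
    hp.summable hv)]
  calc 1 / 2 * Real.log (2 * π * σ ^ 2) + 1 / 2 - 1 / n * Real.log V - (δ / 2 + a / n)
      = 1 / n * (n / 2 * Real.log (2 * π * σ ^ 2) + (1 - δ) * n / 2 + (-a - Real.log V)) := by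
        field_simp
        ring
    _ ≤ _ := by gcongr

variable (M : Submodule ℤ (EuclideanSpace ℝ (Fin n))) [DiscreteTopology M] [IsZLattice ℝ M]

lemma gaussMeasure_not_sq_norm_variance_le_le (hn : 0 < n) (hσ : 0 < σ) :
    gaussMeasure n σ {t | ¬((Summable fun x : coset n (M : Set _) t =>
      dgProb n σ (coset n (M : Set _) t) x *
        (‖(x : EuclideanSpace ℝ (Fin n))‖ ^ 2 - n * σ ^ 2) ^ 2) ∧
      dgMean n σ (coset n (M : Set _) t) (fun x => (‖x‖ ^ 2 - n * σ ^ 2) ^ 2) ≤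
        (4 / √n * (n * σ ^ 2)) ^ 2)} ≤ ENNReal.ofReal (1 / 8) := by
  have hn' : (0 : ℝ) < n := Nat.cast_pos.2 hn
  have hmeas : Measurable fun x : EuclideanSpace ℝ (Fin n) => (‖x‖ ^ 2 - n * σ ^ 2) ^ 2 := by
    fun_prop
  refine gaussMeasure_not_dgMean_le_le M hσ hmeas (fun x => sq_nonneg _) (by positivity) ?_
  rw [lintegral_gaussMeasure_ofReal hσ hmeas (fun x => sq_nonneg _)
    (integrable_sq_norm_sub_sq_mul_gaussF hn hσ _), integral_variance_sq_norm_gaussF hn hσ,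
    mul_pow, div_pow, Real.sq_sqrt hn'.le]
  refine (congrArg _ ?_).le
  field_simp
  norm_num

lemma gaussMeasure_atypical_coset_le (hn : 0 < n) (hσ : 0 < σ) {g : EuclideanSpace ℝ (Fin n) → ℝ}
    (hg : Measurable g) (hg0 : ∀ x, 0 ≤ g x) {ε : ℝ} (hε : 0 < ε)
    (hmean : ∫⁻ x, ENNReal.ofReal (g x) ∂(gaussMeasure n σ) ≤ ENNReal.ofReal ε) :
    gaussMeasure n σ {t | ¬(dgMean n σ (coset n (M : Set _) t) g ≤ 6 * ε ∧
      dgMean n σ (coset n (M : Set _) t) (fun x => ‖x‖ ^ 2) ≤ (1 + 4 / √n) * n * σ ^ 2 ∧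
      1 / 2 * Real.log (2 * π * σ ^ 2) + 1 / 2 - 1 / n * Real.log (ZLattice.covolume M volume) -
        (2 / √n + 4 / n) ≤ 1 / n * dgEntropy n σ (coset n (M : Set _) t))} ≤
      ENNReal.ofReal (1 / 3) := by
  have hexp : Real.exp (-4) ≤ 1 / 24 := by
    rw [Real.exp_neg, ← one_div]
    refine one_div_le_one_div_of_le (by norm_num) ?_
    calc (24 : ℝ) ≤ 2.7 ^ 4 := by norm_num
      _ ≤ Real.exp 1 ^ 4 := by gcongr; linarith [Real.exp_one_gt_d9]
      _ = Real.exp 4 := by rw [← Real.exp_nat_mul]; norm_num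
  have hmean_bad := gaussMeasure_not_dgMean_le_le M hσ hg hg0 (a := 6 * ε) (c := 1 / 6)
    (by positivity) (hmean.trans_eq (by ring_nf))
  have hvar_bad := gaussMeasure_not_sq_norm_variance_le_le M hn hσ
  have hmass_bad := (gaussMeasure_gaussMass_coset_lt_le M hσ (Real.exp_pos (-4))).trans
    (ENNReal.ofReal_le_ofReal hexp)
  calc _ ≤ gaussMeasure n σ (_ ∪ (_ ∪ _)) := measure_mono_ae ?_
    _ ≤ ENNReal.ofReal (1 / 6) + (ENNReal.ofReal (1 / 8) + ENNReal.ofReal (1 / 24)) :=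
      (measure_union_le _ _).trans
        (add_le_add hmean_bad ((measure_union_le _ _).trans (add_le_add hvar_bad hmass_bad)))
    _ = ENNReal.ofReal (1 / 3) := by
      rw [← ENNReal.ofReal_add (by norm_num) (by norm_num),
        ← ENNReal.ofReal_add (by norm_num) (by norm_num)]
      norm_num
  filter_upwards [ae_summable_gaussF_coset M hσ] with t hs hbad
  change t ∈ (_ ∪ (_ ∪ _) : Set _)
  by_contra hgood
  simp only [Set.mem_union, Set.mem_ofPred_eq, not_or, not_not, not_lt] at hgood
  obtain ⟨⟨-, hgt⟩, ⟨hv, hvt⟩, hmass⟩ := hgood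
  have hδ : 4 / √n / 2 = 2 / √n := by ring
  exact hbad ⟨hgt, hδ ▸ dgMean_sq_norm_le_and_le_dgEntropy hn hσ (coset_nonempty M t) hs
    (by positivity) (ZLattice.covolume_pos M volume) hv hvt hmass⟩

lemma two_thirds_le_gaussMeasure_typical_coset (hn : 0 < n) (hσ : 0 < σ)
    {g : EuclideanSpace ℝ (Fin n) → ℝ} (hg : Measurable g) (hg0 : ∀ x, 0 ≤ g x) {ε : ℝ}
    (hε : 0 < ε) (hmean : ∫⁻ x, ENNReal.ofReal (g x) ∂(gaussMeasure n σ) ≤ ENNReal.ofReal ε) :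
    2 / 3 ≤ gaussMeasure n σ {t | dgMean n σ (coset n (M : Set _) t) g ≤ 6 * ε ∧
      dgMean n σ (coset n (M : Set _) t) (fun x => ‖x‖ ^ 2) ≤ (1 + 4 / √n) * n * σ ^ 2 ∧
      1 / 2 * Real.log (2 * π * σ ^ 2) + 1 / 2 - 1 / n * Real.log (ZLattice.covolume M volume) -
        (2 / √n + 4 / n) ≤ 1 / n * dgEntropy n σ (coset n (M : Set _) t)} := by
  have := isProbabilityMeasure_gaussMeasure (n := n) hσ
  have htotal := (measure_univ_le_add_compl _).trans
    (add_le_add_right (gaussMeasure_atypical_coset_le M hn hσ hg hg0 hε hmean) _)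
  rw [measure_univ] at htotal
  refine le_trans (le_of_eq ?_) (tsub_le_iff_right.2 htotal)
  rw [← ENNReal.ofReal_one, ← ENNReal.ofReal_sub _ (by norm_num),
    show (1 - 1 / 3 : ℝ) = 2 / 3 by norm_num, ENNReal.ofReal_div_of_pos three_pos]
  norm_num

end TypicalCoset

section Decoding

variable {n : ℕ} {σ τ a b : ℝ} {K : Set (EuclideanSpace ℝ (Fin n))}

lemma measurableSet_smul_add_smul_notMem (hK : MeasurableSet K) :
    MeasurableSet {p : EuclideanSpace ℝ (Fin n) × EuclideanSpace ℝ (Fin n) |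
      a • p.1 + b • p.2 ∉ K} :=
  (by fun_prop : Measurable fun p : EuclideanSpace ℝ (Fin n) × EuclideanSpace ℝ (Fin n) =>
    a • p.1 + b • p.2) hK.compl

lemma setIntegral_gaussF_smul_add_smul_notMem (hτ : 0 < τ) (hK : MeasurableSet K)
    (x : EuclideanSpace ℝ (Fin n)) : ∫ w in {w | a • x + b • w ∉ K}, gaussF n τ w =
      (gaussMeasure n τ {w | a • x + b • w ∉ K}).toReal :=
  setIntegral_gaussF hτ (measurable_prodMk_left (measurableSet_smul_add_smul_notMem hK))

lemma measurable_setIntegral_gaussF_smul_add_smul_notMem (hτ : 0 < τ) (hK : MeasurableSet K) :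
    Measurable fun x => ∫ w in {w | a • x + b • w ∉ K}, gaussF n τ w := by
  have := isProbabilityMeasure_gaussMeasure (n := n) hτ
  simp_rw [setIntegral_gaussF_smul_add_smul_notMem hτ hK]
  exact (measurable_measure_prodMk_left (measurableSet_smul_add_smul_notMem hK)).ennreal_toReal

lemma lintegral_setIntegral_gaussF_smul_add_smul_notMem {ρ : ℝ} (hσ : 0 < σ) (hτ : 0 < τ)
    (hρ : 0 < ρ) (h : a ^ 2 * σ ^ 2 + b ^ 2 * τ ^ 2 = ρ ^ 2) (hK : MeasurableSet K) :
    ∫⁻ x, ENNReal.ofReal (∫ w in {w | a • x + b • w ∉ K}, gaussF n τ w) ∂(gaussMeasure n σ) =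
      gaussMeasure n ρ Kᶜ := by
  have := isProbabilityMeasure_gaussMeasure (n := n) hτ
  simp_rw [setIntegral_gaussF_smul_add_smul_notMem hτ hK,
    ENNReal.ofReal_toReal (measure_ne_top _ _)]
  rw [← gaussMeasure_map_smul_add_smul hσ hτ hρ h, Measure.map_apply (by fun_prop) hK.compl]
  exact (Measure.prod_apply (measurableSet_smul_add_smul_notMem hK)).symm

end Decoding

section Capacity

lemma mmse_error_variance {σs σw : ℝ} (hσs : 0 < σs) (hσw : 0 < σw) :
    (1 - σs ^ 2 / (σs ^ 2 + σw ^ 2)) ^ 2 * σs ^ 2 +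
      (σs ^ 2 / (σs ^ 2 + σw ^ 2)) ^ 2 * σw ^ 2 = σs ^ 2 * σw ^ 2 / (σs ^ 2 + σw ^ 2) := by
  field_simp
  ring

lemma capacity_sub_half_log_eq {n : ℕ} (hn : 0 < n) {σs σw ρ e V : ℝ} (hσs : 0 < σs)
    (hσw : 0 < σw) (hρ : 0 < ρ) (hρsq : ρ ^ 2 = σs ^ 2 * σw ^ 2 / (σs ^ 2 + σw ^ 2)) (he : 0 < e)
    (hV : 0 < V) :
    1 / 2 * Real.log (1 + σs ^ 2 / σw ^ 2) -
        1 / 2 * Real.log (e ^ 2 * V ^ (2 / (n : ℝ)) / (2 * π * Real.exp 1)) =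
      1 / 2 * Real.log (2 * π * σs ^ 2) + 1 / 2 - 1 / n * Real.log ((e * ρ) ^ n * V) := by
  have hn' : (n : ℝ) ≠ 0 := Nat.cast_ne_zero.2 hn.ne'
  have hsnr : 1 + σs ^ 2 / σw ^ 2 = (σs / ρ) ^ 2 := by
    rw [div_pow, hρsq]
    field_simp
    ring
  have hγ : Real.log (e ^ 2 * V ^ (2 / (n : ℝ)) / (2 * π * Real.exp 1)) =
      2 * Real.log e + 2 / n * Real.log V - Real.log (2 * π) - 1 := by
    rw [Real.log_div (by positivity) (by positivity), Real.log_mul (by positivity) (by positivity),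
      Real.log_mul (by positivity) (by positivity), Real.log_pow, Real.log_rpow hV, Real.log_exp]
    push_cast
    ring
  rw [hsnr, hγ, Real.log_pow, Real.log_div hσs.ne' hρ.ne',
    Real.log_mul (by positivity) (by positivity) (y := σs ^ 2), Real.log_pow,
    Real.log_mul (by positivity) hV.ne', Real.log_pow, Real.log_mul he.ne' hρ.ne']
  push_cast
  field_simp
  ring

end Capacity

theorem awgn_goodness_is_enough_general (n : ℕ) (hn : 0 < n)
    (L : Submodule ℤ (EuclideanSpace ℝ (Fin n))) [DiscreteTopology L] [IsZLattice ℝ L]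
    (σs σw ε : ℝ) (hσs : 0 < σs) (hσw : 0 < σw) (hε0 : 0 < ε) (hε1 : ε < 1)
    (α σeff sε γ : ℝ)
    (hα : α = σs ^ 2 / (σs ^ 2 + σw ^ 2))
    (hσeff : σeff = Real.sqrt (σs ^ 2 * σw ^ 2 / (σs ^ 2 + σw ^ 2)))
    (hsε : sε = errInv n ε L * σeff)
    (hγ : γ = errInv n ε L ^ 2 *
        ZLattice.covolume L volume ^ (2 / (n : ℝ)) / (2 * π * Real.exp 1)) :
    2 / 3 ≤ gaussMeasure n σs {t : EuclideanSpace ℝ (Fin n) |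
      (∑' x : coset n (sε • (L : Set _)) t,
        (gaussF n σs x / gaussMass n σs (coset n (sε • (L : Set _)) t)) *
          ∫ w in {w : EuclideanSpace ℝ (Fin n) |
              (1 - α) • (x : EuclideanSpace ℝ (Fin n)) + α • w ∉ sε • voronoi n L},
            gaussF n σw w) ≤ 6 * ε ∧
      (∑' x : coset n (sε • (L : Set _)) t,
        ‖(x : EuclideanSpace ℝ (Fin n))‖ ^ 2 *
          (gaussF n σs x / gaussMass n σs (coset n (sε • (L : Set _)) t)))
        ≤ (1 + 4 / Real.sqrt n) * n * σs ^ 2 ∧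
      (1 / 2) * Real.log (1 + σs ^ 2 / σw ^ 2) -
          ((1 / 2) * Real.log γ + 2 / Real.sqrt n + 4 / (n : ℝ)) ≤
        (1 / (n : ℝ)) * dgEntropy n σs (coset n (sε • (L : Set _)) t)} := by
  have hσeff_pos : 0 < σeff := hσeff ▸ Real.sqrt_pos.2 (by positivity)
  have hσeff_sq : σeff ^ 2 = σs ^ 2 * σw ^ 2 / (σs ^ 2 + σw ^ 2) :=
    hσeff ▸ Real.sq_sqrt (by positivity)
  have hmmse : (1 - α) ^ 2 * σs ^ 2 + α ^ 2 * σw ^ 2 = σeff ^ 2 := by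
    rw [hα, hσeff_sq, mmse_error_variance hσs hσw]
  have he := (errInv_mem L hn hε0 hε1).1
  have hsε_pos : 0 < sε := hsε ▸ mul_pos he hσeff_pos
  have hcell : MeasurableSet (sε • voronoi n L) :=
    smul_voronoi (n := n) L hsε_pos ▸ (isClosed_voronoiDilate _ _).measurableSet
  have hdecode := (lintegral_setIntegral_gaussF_smul_add_smul_notMem hσs hσw hσeff_pos hmmse
    hcell).trans_le
      (hsε ▸ gaussMeasure_compl_errInv_mul_smul_voronoi_le L hn hσeff_pos hε0 hε1)
  have := discreteTopology_smul L hsε_pos.ne'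
  have := isZLattice_smul L hsε_pos.ne'
  have hcov : ZLattice.covolume (sε • L) volume =
      (errInv n ε L * σeff) ^ n * ZLattice.covolume L volume := by
    rw [covolume_smul L volume hsε_pos.ne', abs_of_pos hsε_pos, finrank_euclideanSpace_fin, hsε]
  refine (two_thirds_le_gaussMeasure_typical_coset (sε • L) hn hσs
    (measurable_setIntegral_gaussF_smul_add_smul_notMem hσw hcell)
    (fun _ => integral_nonneg fun w => (gaussF_pos hσw w).le) hε0 hdecode).trans
      (measure_mono fun t ⟨herror, hpower, hentropy⟩ => ⟨herror, ?_, ?_⟩)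
  · exact (tsum_congr fun x => mul_comm _ _).trans_le hpower
  · have hcap := capacity_sub_half_log_eq hn hσs hσw hσeff_pos hσeff_sq he
      (ZLattice.covolume_pos L volume)
    rw [hcov, ← hcap, ← hγ] at hentropy
    refine le_trans (le_of_eq ?_) hentropy
    ring

/-- a Gaussian-random dither `t` yields, with probability at least 1/2, a discrete
Gaussian code on `s_ε·Λ + t` with decoding error at most `6ε`, power at most `(1+4/√n)nσ_s²`,
and per-symbol entropy within `(1/2)log γ(Λ,ε) + 2/√n + 4/n` of capacity. -/
theorem awgn_goodness_is_enough (n : ℕ) (hn : 16 ≤ n)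
    (L : Submodule ℤ (EuclideanSpace ℝ (Fin n))) [DiscreteTopology L] [IsZLattice ℝ L]
    (σs σw ε : ℝ) (hσs : 0 < σs) (hσw : 0 < σw) (hε0 : 0 < ε) (hε1 : ε < 1)
    (α σeff sε γ : ℝ)
    (hα : α = σs ^ 2 / (σs ^ 2 + σw ^ 2))
    (hσeff : σeff = Real.sqrt (σs ^ 2 * σw ^ 2 / (σs ^ 2 + σw ^ 2)))
    (hsε : sε = errInv n ε (L : Set (EuclideanSpace ℝ (Fin n))) * σeff)
    (hγ : γ = errInv n ε (L : Set (EuclideanSpace ℝ (Fin n))) ^ 2 *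
        ZLattice.covolume L volume ^ (2 / (n : ℝ)) / (2 * π * Real.exp 1)) :
    2⁻¹ ≤ gaussMeasure n σs {t : EuclideanSpace ℝ (Fin n) |
      -- (1) the decoding error probability is at most 6ε
      (∑' x : coset n (sε • (L : Set (EuclideanSpace ℝ (Fin n)))) t,
        (gaussF n σs x / gaussMass n σs (coset n (sε • (L : Set (EuclideanSpace ℝ (Fin n)))) t)) *
          ∫ w in {w : EuclideanSpace ℝ (Fin n) |
              (1 - α) • (x : EuclideanSpace ℝ (Fin n)) + α • w ∉ sε • voronoi n (L : Set (EuclideanSpace ℝ (Fin n)))},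
            gaussF n σw w) ≤ 6 * ε ∧
      -- (2) the expected squared norm is at most (1 + 4/√n)·n·σ_s²
      (∑' x : coset n (sε • (L : Set (EuclideanSpace ℝ (Fin n)))) t,
        ‖(x : EuclideanSpace ℝ (Fin n))‖ ^ 2 *
          (gaussF n σs x / gaussMass n σs (coset n (sε • (L : Set (EuclideanSpace ℝ (Fin n)))) t)))
        ≤ (1 + 4 / Real.sqrt n) * n * σs ^ 2 ∧
      -- (3) the per-symbol entropy is within (1/2)·log γ + 2/√n + 4/n of capacity
      (1 / 2) * Real.log (1 + σs ^ 2 / σw ^ 2) -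
          ((1 / 2) * Real.log γ + 2 / Real.sqrt n + 4 / (n : ℝ)) ≤
        (1 / (n : ℝ)) * dgEntropy n σs (coset n (sε • (L : Set (EuclideanSpace ℝ (Fin n)))) t)} := by
  have half_le : (2⁻¹ : ℝ≥0∞) ≤ 2 / 3 := by
    rw [ENNReal.le_div_iff_mul_le (.inl three_ne_zero) (.inl ENNReal.ofNat_ne_top), mul_comm,
      ← div_eq_mul_inv]
    exact ENNReal.div_le_of_le_mul (by norm_num)
  exact half_le.trans (awgn_goodness_is_enough_general n (by lia) L σs σw ε hσs hσw hε0 hε1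
    α σeff sε γ hα hσeff hsε hγ)
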